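/- Let Ω be a compact subset of ℝ^d and let μ, ν be Borel probability measures on Ω. Then the 1-Wasserstein distance W_1(μ,ν) equals the supremum of ∫_Ω φ d(μ − ν) over all bounded continuous functions φ : Ω → ℝ satisfying the admissibility condition φ(x) − φ(y) ≤ |x − y| for all x ∈ supp(μ) and y ∈ supp(ν). -/

import Mathlib

open MeasureTheory
open scoped ENNReal

/-- The (topological) support of a measure: the set of points all of whose
neighborhoods have positive measure. -/
def msupport {α : Type*} [TopologicalSpace α] [MeasurableSpace α]
    (μ : Measure α) : Set α :=
  {x | ∀ U ∈ nhds x, 0 < μ U}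

/-- `γ` is a coupling of `μ` and `ν`: `γ(A × Ω) = μ(A)` and `γ(Ω × A) = ν(A)` for
all measurable `A`. -/
def IsCoupling {α : Type*} [MeasurableSpace α]
    (γ : Measure (α × α)) (μ ν : Measure α) : Prop :=
  ∀ A : Set α, MeasurableSet A →
    γ (A ×ˢ (Set.univ : Set α)) = μ A ∧ γ ((Set.univ : Set α) ×ˢ A) = ν A

/-- The 1-Wasserstein distance: the infimum of `∫ |x - y| dγ` over all couplings
`γ` of `μ` and `ν`. -/
noncomputable def W1 {α : Type*} [MeasurableSpace α] [PseudoMetricSpace α]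
    (μ ν : Measure α) : ℝ :=
  sInf {r | ∃ γ : Measure (α × α), IsProbabilityMeasure γ ∧ IsCoupling γ μ ν ∧
    r = ∫ p, dist p.1 p.2 ∂γ}

/-!
Weak duality: integrating the constraint `φ x - φ y ≤ dist x y` against a coupling, which is
concentrated on `supp μ × supp ν`, bounds `∫ φ dμ - ∫ φ dν` by the cost of the coupling.

Strong duality: the dual cost `N h = inf {∫ f dμ + ∫ g dν | h ≤ f ⊕ g}` is sublinear in `h`, so by
Hahn–Banach some linear functional `L ≤ N` agrees with `N` at `h = -dist`. Domination by `N` makes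
`L` positive with `L (f ⊕ g) = ∫ f dμ + ∫ g dν`, hence by Riesz–Markov–Kakutani `L` is integration
against a coupling. Finally, a dual pair `-dist ≤ f ⊕ g` is improved to a single `1`-Lipschitz
function, the Lipschitz envelope of `g`, which lies between `-f` and `g`.
-/

section HahnBanach

variable {E : Type*} [AddCommGroup E] [Module ℝ E] {N : E → ℝ}

theorem apply_zero_eq_zero_of_posHomogeneous
    (N_hom : ∀ c : ℝ, 0 < c → ∀ x, N (c • x) = c * N x) : N 0 = 0 := by
  have h := N_hom 2 two_pos 0
  rw [smul_zero] at h
  linarith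

theorem mul_le_apply_smul_of_sublinear (N_hom : ∀ c : ℝ, 0 < c → ∀ x, N (c • x) = c * N x)
    (N_add : ∀ x y, N (x + y) ≤ N x + N y) (c : ℝ) (x : E) : c * N x ≤ N (c • x) := by
  have N_zero := apply_zero_eq_zero_of_posHomogeneous N_hom
  rcases lt_trichotomy c 0 with hc | rfl | hc
  · have h := N_add (c • x) (-c • x)
    rw [← add_smul, add_neg_cancel, zero_smul, N_zero, N_hom (-c) (neg_pos.2 hc)] at h
    linarith
  · simp [N_zero]
  · exact (N_hom c hc x).ge

theorem exists_linearMap_le_sublinear_apply_eq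
    (N_hom : ∀ c : ℝ, 0 < c → ∀ x, N (c • x) = c * N x)
    (N_add : ∀ x y, N (x + y) ≤ N x + N y) (x₀ : E) :
    ∃ L : E →ₗ[ℝ] ℝ, (∀ x, L x ≤ N x) ∧ L x₀ = N x₀ := by
  have well_defined : ∀ c : ℝ, c • x₀ = 0 → RingHom.id ℝ c • N x₀ = 0 := by
    intro c hc
    rcases smul_eq_zero.1 hc with rfl | rfl
    · simp
    · simp [apply_zero_eq_zero_of_posHomogeneous N_hom]
  let ℓ := LinearPMap.mkSpanSingleton' x₀ (N x₀) well_defined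
  have ℓ_le : ∀ x : ℓ.domain, ℓ x ≤ N x := by
    rintro ⟨x, hx⟩
    obtain ⟨c, rfl⟩ := Submodule.mem_span_singleton.1 hx
    exact (LinearPMap.mkSpanSingleton'_apply _ _ _ _ _).trans_le
      (mul_le_apply_smul_of_sublinear N_hom N_add c x₀)
  obtain ⟨L, hLℓ, hLN⟩ := exists_extension_of_le_sublinear ℓ N N_hom N_add ℓ_le
  exact ⟨L, hLN, (hLℓ ⟨x₀, Submodule.mem_span_singleton_self x₀⟩).trans
    (LinearPMap.mkSpanSingleton'_apply_self _ _ _ _)⟩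

end HahnBanach

section CompactSpace

variable {X : Type*} [TopologicalSpace X] [CompactSpace X] [MeasurableSpace X]

theorem integrable_of_continuous [OpensMeasurableSpace X] (μ : Measure X) [IsFiniteMeasure μ]
    {f : X → ℝ} (hf : Continuous f) : Integrable f μ :=
  hf.integrable_of_hasCompactSupport (.of_compactSpace f)

theorem exists_measure_integral_eq_of_nonneg [T2Space X] [BorelSpace X] (L : C(X, ℝ) →ₗ[ℝ] ℝ)
    (hL : ∀ h, 0 ≤ h → 0 ≤ L h) :
    ∃ γ : Measure X, IsFiniteMeasure γ ∧ ∀ h : C(X, ℝ), ∫ x, h x ∂γ = L h := by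
  let Λ : CompactlySupportedContinuousMap X ℝ →ₚ[ℝ] ℝ := PositiveLinearMap.mk₀
    { toFun := fun f => L f.toContinuousMap
      map_add' := fun f g => L.map_add f.toContinuousMap g.toContinuousMap
      map_smul' := fun c f => L.map_smul c f.toContinuousMap }
    (fun f hf => hL f.toContinuousMap hf)
  exact ⟨RealRMK.rieszMeasure Λ, inferInstance, fun h => RealRMK.integral_rieszMeasure Λ
    (CompactlySupportedContinuousMap.continuousMapEquiv h)⟩

end CompactSpace

section Support

variable {α : Type*} [TopologicalSpace α] [MeasurableSpace α] (μ : Measure α)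

theorem msupport_eq_support : msupport μ = μ.support :=
  Set.ext fun x => (Measure.mem_support_iff_forall x).symm

theorem ae_mem_msupport [HereditarilyLindelofSpace α] : ∀ᵐ x ∂μ, x ∈ msupport μ :=
  msupport_eq_support μ ▸ Measure.support_mem_ae

end Support

section Coupling

theorem integral_le_integral_fst_add_integral_snd {X Y : Type*} [MeasurableSpace X]
    [MeasurableSpace Y] {γ : Measure (X × Y)} {h : X × Y → ℝ} {f : X → ℝ} {g : Y → ℝ}
    (hh : Integrable h γ) (hf : Integrable f γ.fst) (hg : Integrable g γ.snd)
    (hle : ∀ᵐ p ∂γ, h p ≤ f p.1 + g p.2) :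
    ∫ p, h p ∂γ ≤ ∫ x, f x ∂γ.fst + ∫ y, g y ∂γ.snd := by
  have hf' : Integrable (fun p : X × Y => f p.1) γ := hf.comp_measurable measurable_fst
  have hg' : Integrable (fun p : X × Y => g p.2) γ := hg.comp_measurable measurable_snd
  calc ∫ p, h p ∂γ ≤ ∫ p, (f p.1 + g p.2) ∂γ := integral_mono_ae hh (hf'.add hg') hle
    _ = ∫ p, f p.1 ∂γ + ∫ p, g p.2 ∂γ := integral_add hf' hg'
    _ = ∫ x, f x ∂γ.fst + ∫ y, g y ∂γ.snd := by
      rw [Measure.fst, Measure.snd, integral_map measurable_fst.aemeasurable hf.1,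
        integral_map measurable_snd.aemeasurable hg.1]

variable {α : Type*} [MeasurableSpace α] {μ ν : Measure α} {γ : Measure (α × α)}

theorem isCoupling_iff_fst_eq_and_snd_eq : IsCoupling γ μ ν ↔ γ.fst = μ ∧ γ.snd = ν := by
  simp only [IsCoupling, Measure.ext_iff, ← forall₂_and]
  refine forall₂_congr fun A hA => ?_
  rw [Measure.fst_apply hA, Measure.snd_apply hA, Set.prod_univ, Set.univ_prod]

theorem IsCoupling.integral_sub_integral_le [TopologicalSpace α] [HereditarilyLindelofSpace α]
    (hγ : IsCoupling γ μ ν) {φ ψ : α → ℝ} {c : α × α → ℝ} (hφ : Integrable φ μ)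
    (hψ : Integrable ψ ν) (hc : Integrable c γ)
    (hle : ∀ x ∈ msupport μ, ∀ y ∈ msupport ν, φ x - ψ y ≤ c (x, y)) :
    ∫ x, φ x ∂μ - ∫ y, ψ y ∂ν ≤ ∫ p, c p ∂γ := by
  obtain ⟨rfl, rfl⟩ := isCoupling_iff_fst_eq_and_snd_eq.1 hγ
  have hfst : ∀ᵐ p ∂γ, p.1 ∈ msupport γ.fst :=
    ae_of_ae_map measurable_fst.aemeasurable (ae_mem_msupport γ.fst)
  have hsnd : ∀ᵐ p ∂γ, p.2 ∈ msupport γ.snd :=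
    ae_of_ae_map measurable_snd.aemeasurable (ae_mem_msupport γ.snd)
  have h := integral_le_integral_fst_add_integral_snd hc.neg hφ.neg hψ <| by
    filter_upwards [hfst, hsnd] with p h₁ h₂
    simp only [Pi.neg_apply]
    linarith [hle _ h₁ _ h₂]
  simp only [Pi.neg_apply, integral_neg] at h
  linarith

end Coupling

section KantorovichDuality

variable {X Y : Type*} [TopologicalSpace X] [TopologicalSpace Y] [MeasurableSpace X]
  [MeasurableSpace Y]

/-- The values `∫ f dμ + ∫ g dν` of the Kantorovich dual problem: the infimum over pairs of
continuous functions with `h ≤ f ⊕ g` is dual to the maximization of `∫ h dγ` over couplings `γ`,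
that is, to optimal transport for the cost `-h`. -/
def dualValues (μ : Measure X) (ν : Measure Y) (h : C(X × Y, ℝ)) : Set ℝ :=
  {r | ∃ (f : C(X, ℝ)) (g : C(Y, ℝ)), (∀ x y, h (x, y) ≤ f x + g y) ∧
    r = ∫ x, f x ∂μ + ∫ y, g y ∂ν}

/-- The value of the Kantorovich dual problem, as a functional of `h`. -/
noncomputable def dualCost (μ : Measure X) (ν : Measure Y) (h : C(X × Y, ℝ)) : ℝ :=
  sInf (dualValues μ ν h)

theorem smul_mem_dualValues {μ : Measure X} {ν : Measure Y} {h : C(X × Y, ℝ)} {c r : ℝ}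
    (hc : 0 ≤ c) (hr : r ∈ dualValues μ ν h) : c * r ∈ dualValues μ ν (c • h) := by
  obtain ⟨f, g, hfg, rfl⟩ := hr
  refine ⟨c • f, c • g, fun x y => ?_, ?_⟩
  · simpa [mul_add] using mul_le_mul_of_nonneg_left (hfg x y) hc
  · simp [integral_const_mul, mul_add]

section Sublinear

variable [CompactSpace X] [CompactSpace Y]

theorem dualValues_nonempty (μ : Measure X) (ν : Measure Y) (h : C(X × Y, ℝ)) :
    (dualValues μ ν h).Nonempty := by
  refine ⟨_, ContinuousMap.const X ‖h‖, 0, fun x y => ?_, rfl⟩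
  simpa using (le_abs_self _).trans (h.norm_coe_le_norm (x, y))

variable [OpensMeasurableSpace X] [OpensMeasurableSpace Y]

theorem add_mem_dualValues {μ : Measure X} {ν : Measure Y} [IsFiniteMeasure μ]
    [IsFiniteMeasure ν] {h k : C(X × Y, ℝ)} {r s : ℝ} (hr : r ∈ dualValues μ ν h)
    (hs : s ∈ dualValues μ ν k) : r + s ∈ dualValues μ ν (h + k) := by
  obtain ⟨f, g, hfg, rfl⟩ := hr
  obtain ⟨f', g', hfg', rfl⟩ := hs
  refine ⟨f + f', g + g', fun x y => ?_, ?_⟩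
  · simpa [add_add_add_comm] using add_le_add (hfg x y) (hfg' x y)
  · simp only [ContinuousMap.add_apply]
    rw [integral_add (integrable_of_continuous μ f.continuous)
        (integrable_of_continuous μ f'.continuous),
      integral_add (integrable_of_continuous ν g.continuous)
        (integrable_of_continuous ν g'.continuous), add_add_add_comm]

variable {μ : Measure X} {ν : Measure Y} [IsProbabilityMeasure μ] [IsProbabilityMeasure ν]

theorem neg_norm_le_of_mem_dualValues {h : C(X × Y, ℝ)} {r : ℝ} (hr : r ∈ dualValues μ ν h) :
    -‖h‖ ≤ r := by
  obtain ⟨f, g, hfg, rfl⟩ := hr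
  have hf : Integrable f (μ.prod ν).fst := integrable_of_continuous _ f.continuous
  have hg : Integrable g (μ.prod ν).snd := integrable_of_continuous _ g.continuous
  have hle : ∀ p : X × Y, -‖h‖ ≤ f p.1 + g p.2 := fun p =>
    (neg_le_of_abs_le (h.norm_coe_le_norm p)).trans (hfg p.1 p.2)
  simpa using
    integral_le_integral_fst_add_integral_snd (integrable_const (-‖h‖)) hf hg (.of_forall hle)

theorem bddBelow_dualValues (h : C(X × Y, ℝ)) : BddBelow (dualValues μ ν h) :=
  ⟨-‖h‖, fun _ hr => neg_norm_le_of_mem_dualValues hr⟩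

theorem dualCost_le {h : C(X × Y, ℝ)} {f : C(X, ℝ)} {g : C(Y, ℝ)}
    (hfg : ∀ x y, h (x, y) ≤ f x + g y) : dualCost μ ν h ≤ ∫ x, f x ∂μ + ∫ y, g y ∂ν :=
  csInf_le (bddBelow_dualValues h) ⟨f, g, hfg, rfl⟩

theorem dualCost_add_le (h k : C(X × Y, ℝ)) :
    dualCost μ ν (h + k) ≤ dualCost μ ν h + dualCost μ ν k := by
  unfold dualCost
  rw [← csInf_add (dualValues_nonempty μ ν h) (bddBelow_dualValues h)
    (dualValues_nonempty μ ν k) (bddBelow_dualValues k)]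
  refine csInf_le_csInf (bddBelow_dualValues _)
    ((dualValues_nonempty μ ν h).add (dualValues_nonempty μ ν k)) ?_
  rintro _ ⟨r, hr, s, hs, rfl⟩
  exact add_mem_dualValues hr hs

theorem dualCost_smul {c : ℝ} (hc : 0 < c) (h : C(X × Y, ℝ)) :
    dualCost μ ν (c • h) = c * dualCost μ ν h := by
  have smul_le : ∀ {c : ℝ}, 0 < c → ∀ h, dualCost μ ν (c • h) ≤ c * dualCost μ ν h := by
    intro c hc h
    rw [← div_le_iff₀' hc]
    refine le_csInf (dualValues_nonempty μ ν h) fun r hr => ?_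
    rw [div_le_iff₀' hc]
    exact csInf_le (bddBelow_dualValues _) (smul_mem_dualValues hc.le hr)
  refine (smul_le hc h).antisymm ?_
  have h_inv := smul_le (inv_pos.2 hc) (c • h)
  rwa [inv_smul_smul₀ hc.ne', le_inv_mul_iff₀ hc] at h_inv

theorem nonneg_of_le_dualCost {L : C(X × Y, ℝ) →ₗ[ℝ] ℝ} (hL : ∀ h, L h ≤ dualCost μ ν h)
    {h : C(X × Y, ℝ)} (hh : 0 ≤ h) : 0 ≤ L h := by
  have h_neg : L (-h) ≤ 0 := by
    simpa using (hL (-h)).trans (dualCost_le (f := 0) (g := 0) fun x y => by simpa using hh (x, y))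
  simpa using h_neg

theorem apply_fst_add_snd_of_le_dualCost {L : C(X × Y, ℝ) →ₗ[ℝ] ℝ}
    (hL : ∀ h, L h ≤ dualCost μ ν h) (f : C(X, ℝ)) (g : C(Y, ℝ)) :
    L (f.comp .fst + g.comp .snd) = ∫ x, f x ∂μ + ∫ y, g y ∂ν := by
  have h_le : ∀ (f : C(X, ℝ)) (g : C(Y, ℝ)),
      L (f.comp .fst + g.comp .snd) ≤ ∫ x, f x ∂μ + ∫ y, g y ∂ν := fun f g =>
    (hL _).trans (dualCost_le fun _ _ => le_rfl)
  refine (h_le f g).antisymm ?_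
  have h_neg := h_le (-f) (-g)
  simp only [ContinuousMap.neg_comp, ← neg_add, map_neg, ContinuousMap.neg_apply,
    integral_neg] at h_neg
  linarith

end Sublinear

theorem exists_fst_eq_snd_eq_integral_eq_dualCost [CompactSpace X] [CompactSpace Y] [T2Space X]
    [T2Space Y] [SecondCountableTopology X] [SecondCountableTopology Y] [BorelSpace X]
    [BorelSpace Y] (μ : Measure X) (ν : Measure Y) [IsProbabilityMeasure μ]
    [IsProbabilityMeasure ν] (h : C(X × Y, ℝ)) :
    ∃ γ : Measure (X × Y), γ.fst = μ ∧ γ.snd = ν ∧ ∫ p, h p ∂γ = dualCost μ ν h := by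
  obtain ⟨L, hL, hLh⟩ := exists_linearMap_le_sublinear_apply_eq
    (fun _ hc => dualCost_smul (μ := μ) (ν := ν) hc) dualCost_add_le h
  obtain ⟨γ, _, hγ⟩ :=
    exists_measure_integral_eq_of_nonneg L fun _ => nonneg_of_le_dualCost hL
  have hL_sum := apply_fst_add_snd_of_le_dualCost hL
  refine ⟨γ, ext_of_forall_integral_eq_of_IsFiniteMeasure fun f => ?_,
    ext_of_forall_integral_eq_of_IsFiniteMeasure fun g => ?_, (hγ h).trans hLh⟩
  · rw [Measure.fst, integral_map measurable_fst.aemeasurable f.continuous.aestronglyMeasurable]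
    simpa using (hγ (f.toContinuousMap.comp .fst)).trans (by simpa using hL_sum f.toContinuousMap 0)
  · rw [Measure.snd, integral_map measurable_snd.aemeasurable g.continuous.aestronglyMeasurable]
    simpa using (hγ (g.toContinuousMap.comp .snd)).trans (by simpa using hL_sum 0 g.toContinuousMap)

end KantorovichDuality

section LipschitzEnvelope

variable {α : Type*} [PseudoMetricSpace α]

/-- The Pasch–Hausdorff envelope of `g`, its infimal convolution with the distance: the largest
`1`-Lipschitz function below `g`, provided `g` is bounded below. -/
noncomputable def lipschitzEnvelope (g : α → ℝ) (x : α) : ℝ :=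
  ⨅ y, (dist x y + g y)

theorem le_lipschitzEnvelope {g : α → ℝ} {x : α} {a : ℝ} (h : ∀ y, a ≤ dist x y + g y) :
    a ≤ lipschitzEnvelope g x :=
  have : Nonempty α := ⟨x⟩
  le_ciInf h

theorem lipschitzEnvelope_le_dist_add {g : α → ℝ} (hg : BddBelow (Set.range g)) (x y : α) :
    lipschitzEnvelope g x ≤ dist x y + g y := by
  obtain ⟨b, hb⟩ := hg
  refine ciInf_le ⟨b, ?_⟩ y
  rintro _ ⟨z, rfl⟩
  exact (hb ⟨z, rfl⟩).trans (le_add_of_nonneg_left dist_nonneg)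

theorem lipschitzEnvelope_le {g : α → ℝ} (hg : BddBelow (Set.range g)) (x : α) :
    lipschitzEnvelope g x ≤ g x := by
  simpa using lipschitzEnvelope_le_dist_add hg x x

theorem lipschitzWith_lipschitzEnvelope {g : α → ℝ} (hg : BddBelow (Set.range g)) :
    LipschitzWith 1 (lipschitzEnvelope g) := by
  refine LipschitzWith.of_le_add fun x x' => ?_
  rw [← sub_le_iff_le_add]
  refine le_lipschitzEnvelope fun y => ?_
  linarith [lipschitzEnvelope_le_dist_add hg x y, dist_triangle x x' y]

theorem exists_lipschitzWith_neg_add_integral_le [CompactSpace α] [MeasurableSpace α]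
    [OpensMeasurableSpace α] (μ ν : Measure α) [IsFiniteMeasure μ] [IsFiniteMeasure ν]
    {f g : C(α, ℝ)} (hfg : ∀ x y, -dist x y ≤ f x + g y) :
    ∃ φ : α → ℝ, LipschitzWith 1 φ ∧
      -(∫ x, f x ∂μ + ∫ y, g y ∂ν) ≤ ∫ x, φ x ∂μ - ∫ y, φ y ∂ν := by
  have hg : BddBelow (Set.range g) := (isCompact_range g.continuous).bddBelow
  have hlip := lipschitzWith_lipschitzEnvelope hg
  refine ⟨lipschitzEnvelope g, hlip, ?_⟩
  have hμ : ∫ x, -f x ∂μ ≤ ∫ x, lipschitzEnvelope g x ∂μ :=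
    integral_mono (integrable_of_continuous μ f.continuous.neg)
      (integrable_of_continuous μ hlip.continuous)
      fun x => le_lipschitzEnvelope fun y => by linarith [hfg x y]
  have hν : ∫ y, lipschitzEnvelope g y ∂ν ≤ ∫ y, g y ∂ν :=
    integral_mono (integrable_of_continuous ν hlip.continuous)
      (integrable_of_continuous ν g.continuous) (lipschitzEnvelope_le hg)
  rw [integral_neg] at hμ
  linarith

end LipschitzEnvelope

section Wasserstein

/-- The values `∫ φ d(μ - ν)` over the bounded continuous `φ` satisfying the admissibility
condition (con) for `(μ, ν)`, which constrains `φ` on the supports only. -/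
def admissibleValues {α : Type*} [PseudoMetricSpace α] [MeasurableSpace α] (μ ν : Measure α) :
    Set ℝ :=
  {r | ∃ φ : α → ℝ, Continuous φ ∧ Bornology.IsBounded (Set.range φ) ∧
    (∀ x ∈ msupport μ, ∀ y ∈ msupport ν, φ x - φ y ≤ dist x y) ∧
    r = ∫ x, φ x ∂μ - ∫ y, φ y ∂ν}

section PseudoMetricSpace

variable {α : Type*} [PseudoMetricSpace α] [CompactSpace α] [MeasurableSpace α] {μ ν : Measure α}

theorem integral_sub_integral_mem_admissibleValues {φ : α → ℝ} (hφ : LipschitzWith 1 φ) :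
    ∫ x, φ x ∂μ - ∫ y, φ y ∂ν ∈ admissibleValues μ ν := by
  refine ⟨φ, hφ.continuous, (isCompact_range hφ.continuous).isBounded, fun x _ y _ => ?_, rfl⟩
  rw [sub_le_iff_le_add']
  simpa using hφ.le_add_mul x y

theorem IsCoupling.integral_dist_mem_upperBounds [OpensMeasurableSpace α] {γ : Measure (α × α)}
    [IsFiniteMeasure γ] (hγ : IsCoupling γ μ ν) :
    ∫ p, dist p.1 p.2 ∂γ ∈ upperBounds (admissibleValues μ ν) := by
  obtain ⟨rfl, rfl⟩ := isCoupling_iff_fst_eq_and_snd_eq.1 hγ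
  rintro _ ⟨φ, hφ, -, hadm, rfl⟩
  exact hγ.integral_sub_integral_le (integrable_of_continuous _ hφ)
    (integrable_of_continuous _ hφ) (integrable_of_continuous γ continuous_dist) hadm

end PseudoMetricSpace

theorem exists_isCoupling_isLUB_admissibleValues {α : Type*} [MetricSpace α] [CompactSpace α]
    [MeasurableSpace α] [BorelSpace α] (μ ν : Measure α) [IsProbabilityMeasure μ]
    [IsProbabilityMeasure ν] :
    ∃ γ : Measure (α × α), IsProbabilityMeasure γ ∧ IsCoupling γ μ ν ∧
      IsLUB (admissibleValues μ ν) (∫ p, dist p.1 p.2 ∂γ) := by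
  let c : C(α × α, ℝ) := ⟨fun p => dist p.1 p.2, continuous_dist⟩
  obtain ⟨γ, hfst, hsnd, hcost⟩ := exists_fst_eq_snd_eq_integral_eq_dualCost μ ν (-c)
  have hγ : IsCoupling γ μ ν := isCoupling_iff_fst_eq_and_snd_eq.2 ⟨hfst, hsnd⟩
  have hprob : IsProbabilityMeasure γ := ⟨by rw [← Measure.fst_univ, hfst, measure_univ]⟩
  refine ⟨γ, hprob, hγ, hγ.integral_dist_mem_upperBounds, fun b hb => ?_⟩
  have hdual : -b ≤ dualCost μ ν (-c) := by
    refine le_csInf (dualValues_nonempty μ ν _) ?_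
    rintro _ ⟨f, g, hfg, rfl⟩
    obtain ⟨φ, hφ, hle⟩ := exists_lipschitzWith_neg_add_integral_le μ ν hfg
    exact neg_le.1 (hle.trans (hb (integral_sub_integral_mem_admissibleValues hφ)))
  have hdist : ∫ p, (-c) p ∂γ = -∫ p, dist p.1 p.2 ∂γ := integral_neg _
  linarith

end Wasserstein

theorem wasserstein_eq_sup_admissible_general {α : Type*} [MetricSpace α] [CompactSpace α]
    [MeasurableSpace α] [BorelSpace α] (μ ν : Measure α) [IsProbabilityMeasure μ]
    [IsProbabilityMeasure ν] :
    W1 μ ν = sSup {r | ∃ φ : α → ℝ, Continuous φ ∧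
      Bornology.IsBounded (Set.range φ) ∧
      (∀ x ∈ msupport μ, ∀ y ∈ msupport ν, φ x - φ y ≤ dist x y) ∧
      r = ∫ x, φ x ∂μ - ∫ y, φ y ∂ν} := by
  obtain ⟨γ, hprob, hγ, hlub⟩ := exists_isCoupling_isLUB_admissibleValues μ ν
  have hmin : IsLeast {r | ∃ γ : Measure (α × α), IsProbabilityMeasure γ ∧ IsCoupling γ μ ν ∧
      r = ∫ p, dist p.1 p.2 ∂γ} (∫ p, dist p.1 p.2 ∂γ) := by
    refine ⟨⟨γ, hprob, hγ, rfl⟩, ?_⟩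
    rintro _ ⟨γ', _, hγ', rfl⟩
    exact hlub.2 hγ'.integral_dist_mem_upperBounds
  exact hmin.csInf_eq.trans (hlub.csSup_eq hlub.nonempty).symm

/-- The 1-Wasserstein distance equals the supremum of `∫ φ d(μ - ν)` over all
bounded continuous `φ` satisfying the admissibility condition
`φ(x) - φ(y) ≤ |x - y|` for all `x ∈ supp μ`, `y ∈ supp ν`. -/
theorem wasserstein_eq_sup_admissible {d : ℕ} (Ω : Set (EuclideanSpace ℝ (Fin d)))
    (hΩ : IsCompact Ω) (μ ν : Measure Ω)
    [IsProbabilityMeasure μ] [IsProbabilityMeasure ν] :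
    W1 μ ν = sSup {r | ∃ φ : Ω → ℝ, Continuous φ ∧
      Bornology.IsBounded (Set.range φ) ∧
      (∀ x ∈ msupport μ, ∀ y ∈ msupport ν, φ x - φ y ≤ dist x y) ∧
      r = ∫ x, φ x ∂μ - ∫ y, φ y ∂ν} := by
  have : CompactSpace Ω := isCompact_iff_compactSpace.1 hΩ
  exact wasserstein_eq_sup_admissible_general μ ν
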